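/- Let S₁, S₂ be 2-dimensional complex vector spaces, H = Hom(S₂,S₁), and C = {(p₁,p₂,a) : a p₂ = p₁ a, det p₁ = det p₂, Tr p₁ = Tr p₂, with p₁, p₂ traceless replaced appropriately} realized as {(p,a) ∈ Λ²H × H : p∧p = 0, p∧a = 0}. Then the coordinate ring ℂ[C], as a graded module over the polynomial ring, has a finite free resolution of length 3 of the form (det H)⁻² → H^∨(det H)⁻¹ ⊕ (det H)⁻¹ → (det H)⁻¹ ⊕ Λ³H^∨ → O, equivariant for GL(H). -/

import Mathlib

/-!
The components of `p ∧ p` and `p ∧ a` are the `4 × 4` Pfaffians of the skew-symmetric `5 × 5` matrix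
`M` of `a ∧ e₀ + p ∈ Λ²(ℂ ⊕ H)`, so `C` is the affine cone over `G(2, 5)`, and its resolution is the
Pfaffian complex `O → O⁵ → O⁵ → O` with differentials the column of Pfaffians, `M`, and the row of
Pfaffians.

If `M v = 0`, then `v` is proportional to the column of Pfaffians; since one of them is prime and
does not divide another, `v` is a multiple of that column. Now invert an entry `a i` of `M`.
Modulo the range of `M`, every relation between the Pfaffians is supported on three of them. These
three can be solved for distinct variables, so they form a regular sequence and their relations are
generated by the Koszul ones, which lie in the range of `M`; likewise, a function vanishing on `C`
becomes a combination of the three. It remains to see that `a i` is a nonzerodivisor on the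
cokernels of `M` and of the row. This follows from the exactness one step to the left after setting
`a i = 0`. For the ideal of Pfaffians this means exactness at `M` with `a 0 = 0`, which is proved in
the same way with the entry `a 1`.

Equivariance is the identity `M(Λ²m p, m a) = (1 ⊕ m) M(p, a) (1 ⊕ m)ᵀ`.
-/

noncomputable section

open MvPolynomial

/-- Polynomial ring on `Λ²H × H ≅ ℂ⁶ × ℂ⁴` for `H = ℂ⁴`. -/
abbrev R8 := MvPolynomial (Fin 6 ⊕ Fin 4) ℂ

/-- Index pairs: coordinate `s` of `Λ²H` is the coefficient of `e_i ∧ e_j`. -/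
def idxPair : Fin 6 → Fin 4 × Fin 4 := ![(0,1), (0,2), (0,3), (1,2), (1,3), (2,3)]

/-- The Plücker relation `p ∧ p = 0`. -/
def pl8 : R8 := X (Sum.inl 0) * X (Sum.inl 5) - X (Sum.inl 1) * X (Sum.inl 4) +
  X (Sum.inl 2) * X (Sum.inl 3)

/-- The four components of `p ∧ a ∈ Λ³H`. -/
def wedge8 : Fin 4 → R8 :=
  ![X (Sum.inl 0) * X (Sum.inr 2) - X (Sum.inl 1) * X (Sum.inr 1) +
      X (Sum.inl 3) * X (Sum.inr 0),
    X (Sum.inl 0) * X (Sum.inr 3) - X (Sum.inl 2) * X (Sum.inr 1) +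
      X (Sum.inl 4) * X (Sum.inr 0),
    X (Sum.inl 1) * X (Sum.inr 3) - X (Sum.inl 2) * X (Sum.inr 2) +
      X (Sum.inl 5) * X (Sum.inr 0),
    X (Sum.inl 3) * X (Sum.inr 3) - X (Sum.inl 4) * X (Sum.inr 2) +
      X (Sum.inl 5) * X (Sum.inr 1)]

/-- `C = {(p,a) : p ∧ p = 0, p ∧ a = 0}` in coordinates. -/
def C8 : Set (Fin 6 ⊕ Fin 4 → ℂ) :=
  {x | eval x pl8 = 0 ∧ ∀ i, eval x (wedge8 i) = 0}

/-- The vanishing ideal of `C`; the coordinate ring `ℂ[C]` is `R8 ⧸ J8`. -/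
def J8 : Ideal R8 where
  carrier := {f | ∀ x ∈ C8, eval x f = 0}
  add_mem' := fun ha hb x hx => by simp [map_add, ha x hx, hb x hx]
  zero_mem' := fun x hx => by simp
  smul_mem' := fun c f hf x hx => by simp [smul_eq_mul, map_mul, hf x hx]

/-- Substitution action of `m ∈ GL(H)` on the polynomial ring: the variables of
`Λ²H` transform by `Λ²m`, those of `H` by `m`. -/
def subst8 (m : Matrix (Fin 4) (Fin 4) ℂ) : R8 →ₐ[ℂ] R8 :=
  aeval (Sum.elim
    (fun s => ∑ t : Fin 6,
      C (m (idxPair s).1 (idxPair t).1 * m (idxPair s).2 (idxPair t).2 -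
         m (idxPair s).1 (idxPair t).2 * m (idxPair s).2 (idxPair t).1) * X (Sum.inl t))
    (fun i => ∑ j : Fin 4, C (m i j) * X (Sum.inr j)))

/-- Action of `g ∈ GL(H)` on `O` (functions). -/
def act0 (g : Matrix.GeneralLinearGroup (Fin 4) ℂ) (r : R8) : R8 :=
  subst8 (↑g⁻¹ : Matrix (Fin 4) (Fin 4) ℂ) r

/-- Action of `g` on the free module on `(det H)⁻¹ ⊕ Λ³H^∨`
(using `Λ³H^∨ ≅ H ⊗ (det H)⁻¹`). -/
def act1 (g : Matrix.GeneralLinearGroup (Fin 4) ℂ) (v : R8 × (Fin 4 → R8)) :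
    R8 × (Fin 4 → R8) :=
  (C (↑g⁻¹ : Matrix (Fin 4) (Fin 4) ℂ).det * act0 g v.1,
   fun i => C (↑g⁻¹ : Matrix (Fin 4) (Fin 4) ℂ).det *
     ∑ j : Fin 4, C ((↑g : Matrix (Fin 4) (Fin 4) ℂ) i j) * act0 g (v.2 j))

/-- Action of `g` on the free module on `H^∨ (det H)⁻¹ ⊕ (det H)⁻¹`. -/
def act2 (g : Matrix.GeneralLinearGroup (Fin 4) ℂ) (v : (Fin 4 → R8) × R8) :
    (Fin 4 → R8) × R8 :=
  (fun i => C (↑g⁻¹ : Matrix (Fin 4) (Fin 4) ℂ).det *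
     ∑ j : Fin 4, C ((↑g⁻¹ : Matrix (Fin 4) (Fin 4) ℂ) j i) * act0 g (v.1 j),
   C (↑g⁻¹ : Matrix (Fin 4) (Fin 4) ℂ).det * act0 g v.2)

/-- Action of `g` on the free module on `(det H)⁻²`. -/
def act3 (g : Matrix.GeneralLinearGroup (Fin 4) ℂ) (r : R8) : R8 :=
  C ((↑g⁻¹ : Matrix (Fin 4) (Fin 4) ℂ).det ^ 2) * act0 g r

open Matrix

section Saturation

theorem map_comp_mulVec {R S m n F : Type*} [Fintype n] [NonAssocSemiring R] [NonAssocSemiring S]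
    [FunLike F R S] [RingHomClass F R S] (φ : F) (A : Matrix m n R) (v : n → R) :
    φ ∘ (A *ᵥ v) = A.map φ *ᵥ (φ ∘ v) :=
  funext (RingHom.map_mulVec (φ : R →+* S) A v)

theorem map_comp_smul {R S n F : Type*} [Mul R] [Mul S] [FunLike F R S] [MulHomClass F R S]
    (φ : F) (r : R) (v : n → R) : φ ∘ (r • v) = φ r • (φ ∘ v) :=
  funext fun i ↦ map_mul φ r (v i)

variable {R M : Type*} [CommRing R] [AddCommGroup M] [Module R M]

theorem mem_of_pow_smul_mem {N : Submodule R M} {x : R} (hx : IsSMulRegular (M ⧸ N) x) {n : ℕ}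
    {u : M} (hu : x ^ n • u ∈ N) : u ∈ N :=
  mem_of_isSMulRegular_quotient_of_smul_mem (hx.pow n) hu

variable {l m n : Type*} [Fintype l] [Fintype n]

theorem isSMulRegular_quotient_range_mulVecLin {A : Matrix m n R} {B : Matrix n l R} {x : R}
    {φ : R →+* R} (hx : IsSMulRegular R x) (hφx : φ x = 0) (hφ : ∀ r, x ∣ r - φ r)
    (hAB : A * B = 0)
    (hexact : Function.Exact (B.map φ).mulVecLin (A.map φ).mulVecLin) :
    IsSMulRegular ((m → R) ⧸ LinearMap.range A.mulVecLin) x := by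
  rw [isSMulRegular_quotient_iff_mem_of_smul_mem]
  rintro u ⟨v, hv⟩
  have hred : (A.map φ) *ᵥ (φ ∘ v) = 0 := by
    rw [← map_comp_mulVec, ← mulVecLin_apply, hv, map_comp_smul, hφx, zero_smul]
  obtain ⟨w, hw⟩ := (hexact _).1 hred
  have hvw : ∀ j, x ∣ (v - B *ᵥ w) j := fun j ↦ by
    have hwj : ∑ k, φ (B j k) * w k = φ (v j) := congrFun hw j
    have : (v - B *ᵥ w) j = (v j - φ (v j)) - ∑ k, (B j k - φ (B j k)) * w k := by
      simp only [sub_mul, Finset.sum_sub_distrib, hwj, Pi.sub_apply, mulVec, dotProduct]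
      ring
    rw [this]
    exact dvd_sub (hφ _) (Finset.dvd_sum fun k _ ↦ (hφ _).mul_right _)
  choose v' hv' using hvw
  have hdecomp : v = B *ᵥ w + x • v' := by
    rw [← sub_eq_iff_eq_add']
    exact funext hv'
  have hxu : x • (A *ᵥ v') = x • u := by
    rw [← hv, hdecomp, mulVecLin_apply, mulVec_add, mulVec_mulVec, hAB, zero_mulVec, zero_add,
      mulVec_smul]
  exact ⟨v', (Pi.isSMulRegular_iff.2 fun _ ↦ hx) hxu⟩

end Saturation

section Koszul

variable {R ι : Type*} [CommRing R]

/-- The family `(f i)` for `i ∈ s`, in every order, is a weakly regular sequence after inverting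
`x`. -/
def IsWeaklyRegularAway (x : R) (f : ι → R) (s : Finset ι) : Prop :=
  ∀ t ⊆ s, ∀ j ∈ s, j ∉ t → ∀ h : R, f j * h ∈ Ideal.span (f '' t) →
    ∃ n : ℕ, x ^ n * h ∈ Ideal.span (f '' t)

theorem IsWeaklyRegularAway.mono {x : R} {f : ι → R} {s t : Finset ι}
    (hf : IsWeaklyRegularAway x f s) (hts : t ⊆ s) : IsWeaklyRegularAway x f t :=
  fun r hr j hj ↦ hf r (hr.trans hts) j (hts hj)

variable [Fintype ι] [DecidableEq ι]

theorem dotProduct_koszul (f : ι → R) (i j : ι) :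
    f ⬝ᵥ (f i • Pi.single j 1 - f j • Pi.single i 1) = 0 := by
  simp [dotProduct_sub, mul_comm]

theorem IsWeaklyRegularAway.exists_pow_smul_mem {x : R} {f : ι → R} {s : Finset ι}
    (hf : IsWeaklyRegularAway x f s) {N : Submodule R (ι → R)}
    (hN : ∀ i j, f i • Pi.single j 1 - f j • Pi.single i 1 ∈ N) {u : ι → R}
    (hu : ∀ i ∉ s, u i = 0) (hfu : f ⬝ᵥ u = 0) : ∃ n : ℕ, x ^ n • u ∈ N := by
  induction s using Finset.induction_on generalizing u with
  | empty =>
    obtain rfl : u = 0 := funext fun i ↦ hu i (Finset.notMem_empty i)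
    exact ⟨0, by simp⟩
  | insert j t hj ih =>
    have hsyz : f j * u j = -∑ i ∈ t, f i * u i := by
      rw [eq_neg_iff_add_eq_zero, ← Finset.sum_insert hj (f := fun i ↦ f i * u i), ← hfu]
      exact Finset.sum_subset (Finset.subset_univ _) fun i _ hi ↦ by rw [hu i hi, mul_zero]
    have hmem : f j * u j ∈ Ideal.span (f '' t) := hsyz ▸ neg_mem (sum_mem fun i hi ↦
      Ideal.mul_mem_right _ _ (Ideal.subset_span ⟨i, hi, rfl⟩))
    obtain ⟨n, hn⟩ := hf t (Finset.subset_insert j t) j (Finset.mem_insert_self j t) hj _ hmem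
    obtain ⟨c, hc⟩ := Submodule.mem_span_image_finset_iff_exists_fun' R |>.1 hn
    set b : ι → R := ∑ i ∈ t, c i • (f i • Pi.single j 1 - f j • Pi.single i 1) with hb
    have hbN : b ∈ N := sum_mem fun i _ ↦ N.smul_mem _ (hN i j)
    have hfb : f ⬝ᵥ b = 0 := by
      simp only [hb, dotProduct_sum, dotProduct_smul, dotProduct_koszul, smul_zero,
        Finset.sum_const_zero]
    have hub : ∀ i ∉ t, (x ^ n • u - b) i = 0 := fun i hi ↦ by
      have hbi : b i = x ^ n * u j * Pi.single (M := fun _ ↦ R) j 1 i := by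
        rw [← hc, hb, Finset.sum_apply, Finset.sum_mul]
        refine Finset.sum_congr rfl fun k hk ↦ ?_
        simp [Pi.single_eq_of_ne (ne_of_mem_of_not_mem hk hi).symm, mul_assoc]
      rw [Pi.sub_apply, hbi]
      by_cases hij : i = j
      · simp [hij]
      · simp [hij, hu i (by simp [hij, hi])]
    obtain ⟨m, hm⟩ := ih (hf.mono (Finset.subset_insert j t)) hub
      (by rw [dotProduct_sub, dotProduct_smul, hfu, hfb, smul_zero, sub_zero])
    refine ⟨m + n, ?_⟩
    rw [pow_add, mul_smul]
    simpa [smul_sub] using add_mem hm (N.smul_mem (x ^ m) hbN)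

end Koszul

section Variables

variable {σ R : Type*} [CommRing R]

theorem X_dvd_sub_aeval_update [DecidableEq σ] (k : σ) (f : MvPolynomial σ R) :
    X k ∣ f - aeval (Function.update X k 0) f := by
  have h : (Ideal.Quotient.mkₐ R (Ideal.span {X k})).comp (aeval (Function.update X k 0)) =
      Ideal.Quotient.mkₐ R (Ideal.span {(X k : MvPolynomial σ R)}) := by
    ext i
    by_cases hi : i = k
    · subst hi
      simp [Ideal.Quotient.eq_zero_iff_mem.2 (Ideal.mem_span_singleton_self _)]
    · simp [hi]
  rw [← Ideal.mem_span_singleton, ← Ideal.Quotient.eq]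
  exact (DFunLike.congr_fun h f).symm

theorem eval_eq_eval_of_mem_supported {s : Set σ} {f : MvPolynomial σ R}
    (hf : f ∈ supported R s) {z z' : σ → R} (h : Set.EqOn z z' s) : eval z f = eval z' f :=
  eval₂Hom_congr' rfl (fun _ hi _ ↦ h (mem_supported.1 hf hi)) rfl

theorem exists_pow_mul_sub_mem {Y : Set σ} {x : MvPolynomial σ R} {q : σ → MvPolynomial σ R}
    {I : Ideal (MvPolynomial σ R)} (hx : x ∈ supported R Yᶜ)
    (hq : ∀ y ∈ Y, q y ∈ supported R Yᶜ) (hI : ∀ y ∈ Y, x * X y - q y ∈ I)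
    (u : MvPolynomial σ R) : ∃ n : ℕ, ∃ r ∈ supported R Yᶜ, x ^ n * u - r ∈ I := by
  induction u using MvPolynomial.induction_on with
  | C a => exact ⟨0, C a, algebraMap_mem _ a, by simp⟩
  | add p p' hp hp' =>
    obtain ⟨n, r, hr, hn⟩ := hp
    obtain ⟨m, r', hr', hm⟩ := hp'
    refine ⟨n + m, x ^ m * r + x ^ n * r',
      add_mem (mul_mem (pow_mem hx m) hr) (mul_mem (pow_mem hx n) hr'), ?_⟩
    convert add_mem (I.mul_mem_left (x ^ m) hn) (I.mul_mem_left (x ^ n) hm) using 1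
    ring
  | mul_X p i hp =>
    obtain ⟨n, r, hr, hn⟩ := hp
    by_cases hi : i ∈ Y
    · refine ⟨n + 1, q i * r, mul_mem (hq i hi) hr, ?_⟩
      convert add_mem (I.mul_mem_left (x * X i) hn) (I.mul_mem_left r (hI i hi)) using 1
      ring
    · refine ⟨n, X i * r, mul_mem (Algebra.subset_adjoin ⟨i, hi, rfl⟩) hr, ?_⟩
      convert I.mul_mem_left (X i) hn using 1
      ring

theorem mul_X_sub_ne_zero [IsDomain R] [Infinite R] {i : σ} {x q : MvPolynomial σ R}
    (hx0 : x ≠ 0) (hx : x ∈ supported R {i}ᶜ) (hq : q ∈ supported R {i}ᶜ) : x * X i - q ≠ 0 := by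
  classical
  intro h
  refine hx0 (MvPolynomial.funext fun z ↦ ?_)
  have hagree : ∀ c : R, Set.EqOn z (Function.update z i c) {i}ᶜ := fun c j hj ↦
    (Function.update_of_ne hj c z).symm
  have heval : ∀ c : R, eval z x * c - eval z q = 0 := fun c ↦ by
    simpa [← eval_eq_eval_of_mem_supported hx (hagree c),
      ← eval_eq_eval_of_mem_supported hq (hagree c)] using
      congrArg (eval (Function.update z i c)) h
  rw [map_zero]
  linear_combination heval 1 - heval 0

variable {ι : Type*}

theorem supported_compl_image_anti (y : ι → σ) {s t : Finset ι} (hts : t ⊆ s) :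
    supported R (y '' s)ᶜ ≤ supported R (y '' t)ᶜ :=
  supported_mono (Set.compl_subset_compl.2 (Set.image_mono hts))

/-- Up to units, `f i = x * X (y i) - q (y i)` for `i ∈ s`, where neither `x` nor the `q (y i)`
involve the variables `X (y j)` for `j ∈ s`: away from the zeros of `x`, the equations `f i = 0`
can be solved for the variables `X (y i)`. -/
structure SolvesForVariables (x : MvPolynomial σ R) (f : ι → MvPolynomial σ R)
    (y : ι → σ) (q : σ → MvPolynomial σ R) (s : Finset ι) : Prop where
  injOn : Set.InjOn y s
  mem_supported : x ∈ supported R (y '' s)ᶜ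
  apply_mem_supported : ∀ i ∈ s, q (y i) ∈ supported R (y '' s)ᶜ
  associated : ∀ i ∈ s, Associated (f i) (x * X (y i) - q (y i))

variable {x : MvPolynomial σ R} {f : ι → MvPolynomial σ R} {y : ι → σ}
  {q : σ → MvPolynomial σ R} {s t : Finset ι}

theorem SolvesForVariables.mono (h : SolvesForVariables x f y q s) (hts : t ⊆ s) :
    SolvesForVariables x f y q t :=
  have hsub := supported_compl_image_anti (R := R) y hts
  { injOn := h.injOn.mono hts
    mem_supported := hsub h.mem_supported
    apply_mem_supported := fun i hi ↦ hsub (h.apply_mem_supported i (hts hi))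
    associated := fun i hi ↦ h.associated i (hts hi) }

end Variables

section Elimination

variable {σ ι K : Type*} [Field K] [Infinite K] {x : MvPolynomial σ K} {f : ι → MvPolynomial σ K}
  {y : ι → σ} {q : σ → MvPolynomial σ K} {s : Finset ι}

theorem exists_pow_mul_mem_of_eval_eq_zero {Y : Set σ} {g u : MvPolynomial σ K}
    {I : Ideal (MvPolynomial σ K)} (hx : x ∈ supported K Yᶜ) (hx0 : x ≠ 0)
    (hg : g ∈ supported K Yᶜ) (hg0 : g ≠ 0) (hq : ∀ y ∈ Y, q y ∈ supported K Yᶜ)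
    (hI : ∀ y ∈ Y, x * X y - q y ∈ I)
    (hu : ∀ z : σ → K, eval z g ≠ 0 → (∀ y ∈ Y, eval z (x * X y - q y) = 0) → eval z u = 0) :
    ∃ n : ℕ, x ^ n * u ∈ I := by
  obtain ⟨n, r, hr, hn⟩ := exists_pow_mul_sub_mem hx hq
    (I := Ideal.span ((fun y ↦ x * X y - q y) '' Y)) (fun y hy ↦ Ideal.subset_span ⟨y, hy, rfl⟩) u
  suffices hr0 : x * g * r = 0 by
    rw [((mul_eq_zero_iff_left (mul_ne_zero hx0 hg0)).1 hr0), sub_zero] at hn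
    exact ⟨n, Ideal.span_le.2 (Set.image_subset_iff.2 hI) hn⟩
  refine MvPolynomial.funext fun z ↦ ?_
  classical
  by_cases hxg : eval z (x * g) = 0
  · rw [map_mul, hxg, zero_mul, map_zero]
  set z' : σ → K := fun i ↦ if i ∈ Y then eval z (q i) / eval z x else z i
  have hagree : Set.EqOn z z' Yᶜ := fun i hi ↦ (if_neg hi).symm
  have hzero : ∀ y ∈ Y, eval z' (x * X y - q y) = 0 := fun y hy ↦ by
    have hz'y : z' y = eval z (q y) / eval z x := if_pos hy
    rw [map_sub, map_mul, eval_X, ← eval_eq_eval_of_mem_supported hx hagree,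
      ← eval_eq_eval_of_mem_supported (hq y hy) hagree, hz'y,
      mul_div_cancel₀ _ (left_ne_zero_of_mul (by rwa [map_mul] at hxg)), sub_self]
  have hgz' : eval z' g ≠ 0 := by
    rw [← eval_eq_eval_of_mem_supported hg hagree]
    exact right_ne_zero_of_mul (by rwa [map_mul] at hxg)
  have hker : Ideal.span ((fun y ↦ x * X y - q y) '' Y) ≤ RingHom.ker (eval z') :=
    Ideal.span_le.2 (Set.image_subset_iff.2 hzero)
  have hrz' : eval z' (x ^ n * u - r) = 0 := hker hn
  rw [map_sub, map_mul, hu z' hgz' hzero, mul_zero, zero_sub, neg_eq_zero] at hrz'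
  rw [map_mul, eval_eq_eval_of_mem_supported hr hagree, hrz', mul_zero, map_zero]

namespace SolvesForVariables

theorem exists_pow_mul_mem_span (h : SolvesForVariables x f y q s) (hx0 : x ≠ 0)
    {g u : MvPolynomial σ K} (hg : g ∈ supported K (y '' s)ᶜ) (hg0 : g ≠ 0)
    (hu : ∀ z : σ → K, eval z g ≠ 0 → (∀ i ∈ s, eval z (f i) = 0) → eval z u = 0) :
    ∃ n : ℕ, x ^ n * u ∈ Ideal.span (f '' s) := by
  refine exists_pow_mul_mem_of_eval_eq_zero h.mem_supported hx0 hg hg0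
    (Set.forall_mem_image.2 h.apply_mem_supported)
    (Set.forall_mem_image.2 fun i hi ↦ Ideal.mem_of_dvd _ (h.associated i hi).dvd
      (Ideal.subset_span ⟨i, hi, rfl⟩)) fun z hzg hz ↦ hu z hzg fun i hi ↦ ?_
  have hdvd := map_dvd (eval z) (h.associated i hi).dvd'
  rwa [hz _ ⟨i, hi, rfl⟩, zero_dvd_iff] at hdvd

theorem isWeaklyRegularAway (h : SolvesForVariables x f y q s) (hx0 : x ≠ 0) :
    IsWeaklyRegularAway x f s := by
  intro t hts j hjs hjt u hu
  have hyj : y j ∉ y '' t := fun ⟨i, hi, hij⟩ ↦ hjt (h.injOn (hts hi) hjs hij ▸ hi)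
  have hjj := h.mono (Finset.singleton_subset_iff.2 hjs)
  have hsub := supported_compl_image_anti (R := K) y hts
  have hfj : x * X (y j) - q (y j) ∈ supported K (y '' t)ᶜ :=
    sub_mem (mul_mem (hsub h.mem_supported) (X_mem_supported.2 hyj))
      (hsub (h.apply_mem_supported j hjs))
  have hfj0 : x * X (y j) - q (y j) ≠ 0 :=
    mul_X_sub_ne_zero hx0 (by simpa using hjj.mem_supported)
      (by simpa using hjj.apply_mem_supported j (Finset.mem_singleton_self j))
  refine (h.mono hts).exists_pow_mul_mem_span hx0 hfj hfj0 fun z hzj hz ↦ ?_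
  have hzfj : eval z (f j) ≠ 0 := fun h0 ↦
    hzj (zero_dvd_iff.1 (h0 ▸ map_dvd (eval z) (h.associated j hjs).dvd))
  have hker : Ideal.span (f '' t) ≤ RingHom.ker (eval z) :=
    Ideal.span_le.2 (Set.image_subset_iff.2 hz)
  exact (mul_eq_zero_iff_left hzfj).1 (by simpa using hker hu)

end SolvesForVariables

end Elimination

section SkewMatrix

variable {R S : Type*} [CommRing R] [CommRing S] (p : Fin 6 → R) (a : Fin 4 → R)

/-- The skew-symmetric `5 × 5` matrix of the element `a ∧ e₀ + p` of `Λ²(R ⊕ R⁴)`, with the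
coordinates of `p` ordered as in `idxPair`. -/
def skewMatrix : Matrix (Fin 5) (Fin 5) R :=
  !![0, -a 0, -a 1, -a 2, -a 3;
    a 0, 0, p 0, p 1, p 2;
    a 1, -p 0, 0, p 3, p 4;
    a 2, -p 1, -p 3, 0, p 5;
    a 3, -p 2, -p 4, -p 5, 0]

/-- The Pfaffians of the five `4 × 4` principal submatrices of `skewMatrix p a`; the sign `(-1) ^ i`
for the submatrix omitting row and column `i` makes the vector a syzygy of the matrix. -/
def subPfaffians : Fin 5 → R :=
  ![p 0 * p 5 - p 1 * p 4 + p 2 * p 3,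
    p 3 * a 3 - p 4 * a 2 + p 5 * a 1,
    -(p 1 * a 3 - p 2 * a 2 + p 5 * a 0),
    p 0 * a 3 - p 2 * a 1 + p 4 * a 0,
    -(p 0 * a 2 - p 1 * a 1 + p 3 * a 0)]

/-- The Pfaffian adjoint of the submatrix of `skewMatrix p a` omitting row and column `i`, padded
with a zero row and column: the Pfaffian analogue of the adjugate. -/
def pfaffianAdjoint : Fin 5 → Matrix (Fin 5) (Fin 5) R :=
  ![!![0, 0, 0, 0, 0; 0, 0, -p 5, p 4, -p 3; 0, p 5, 0, -p 2, p 1;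
      0, -p 4, p 2, 0, -p 0; 0, p 3, -p 1, p 0, 0],
    !![0, 0, p 5, -p 4, p 3; 0, 0, 0, 0, 0; -p 5, 0, 0, -a 3, a 2;
      p 4, 0, a 3, 0, -a 1; -p 3, 0, -a 2, a 1, 0],
    !![0, -p 5, 0, p 2, -p 1; p 5, 0, 0, a 3, -a 2; 0, 0, 0, 0, 0;
      -p 2, -a 3, 0, 0, a 0; p 1, a 2, 0, -a 0, 0],
    !![0, p 4, -p 2, 0, p 0; -p 4, 0, -a 3, 0, a 1; p 2, a 3, 0, 0, -a 0;
      0, 0, 0, 0, 0; -p 0, -a 1, a 0, 0, 0],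
    !![0, -p 3, p 1, -p 0, 0; p 3, 0, a 2, -a 1, 0; -p 1, -a 2, 0, a 0, 0;
      p 0, a 1, -a 0, 0, 0; 0, 0, 0, 0, 0]]

theorem transpose_skewMatrix : (skewMatrix p a)ᵀ = -skewMatrix p a := by
  ext i j
  fin_cases i <;> fin_cases j <;> simp [skewMatrix]

theorem skewMatrix_apply_self (i : Fin 5) : skewMatrix p a i i = 0 := by
  fin_cases i <;> rfl

theorem skewMatrix_apply_swap (i j : Fin 5) : skewMatrix p a j i = -skewMatrix p a i j :=
  congrFun (congrFun (transpose_skewMatrix p a) i) j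

theorem skewMatrix_mulVec_subPfaffians : skewMatrix p a *ᵥ subPfaffians p a = 0 := by
  ext i
  fin_cases i <;> simp [skewMatrix, subPfaffians, mulVec, dotProduct, Fin.sum_univ_succ] <;> ring

theorem subPfaffians_vecMul_skewMatrix : subPfaffians p a ᵥ* skewMatrix p a = 0 := by
  rw [← mulVec_transpose, transpose_skewMatrix, neg_mulVec, skewMatrix_mulVec_subPfaffians,
    neg_zero]

theorem subPfaffians_dotProduct_skewMatrix_mulVec (v : Fin 5 → R) :
    subPfaffians p a ⬝ᵥ skewMatrix p a *ᵥ v = 0 := by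
  rw [dotProduct_mulVec, subPfaffians_vecMul_skewMatrix, zero_dotProduct]

theorem skewMatrix_mul_pfaffianAdjoint (i : Fin 5) :
    skewMatrix p a * pfaffianAdjoint p a i =
      subPfaffians p a i • 1 - vecMulVec (Pi.single i 1) (subPfaffians p a) := by
  ext j k
  rw [mul_apply, Fin.sum_univ_five, Matrix.sub_apply, Matrix.smul_apply, vecMulVec_apply,
    smul_eq_mul, one_apply, Pi.single_apply]
  fin_cases i <;> fin_cases j <;> fin_cases k <;>
    simp only [skewMatrix, subPfaffians, pfaffianAdjoint, Fin.zero_eta, Fin.mk_one,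
      Fin.reduceFinMk, of_apply, cons_val, Fin.reduceEq, ↓reduceIte] <;> ring

theorem koszul_mem_range_skewMatrix (i j : Fin 5) :
    subPfaffians p a i • Pi.single j 1 - subPfaffians p a j • Pi.single i 1 ∈
      LinearMap.range (skewMatrix p a).mulVecLin := by
  refine ⟨pfaffianAdjoint p a i *ᵥ Pi.single j 1, ?_⟩
  rw [mulVecLin_apply, mulVec_mulVec, skewMatrix_mul_pfaffianAdjoint, sub_mulVec, smul_mulVec,
    one_mulVec, vecMulVec_mulVec, dotProduct_single, mul_one, op_smul_eq_smul]

variable {F : Type*} [FunLike F R S] [RingHomClass F R S]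

theorem skewMatrix_map (φ : F) : (skewMatrix p a).map φ = skewMatrix (φ ∘ p) (φ ∘ a) := by
  ext i j
  fin_cases i <;> fin_cases j <;> simp [skewMatrix]

theorem map_comp_subPfaffians (φ : F) :
    φ ∘ subPfaffians p a = subPfaffians (φ ∘ p) (φ ∘ a) := by
  ext i
  fin_cases i <;> simp [subPfaffians]

end SkewMatrix

section Exactness

variable {R : Type*} [CommRing R] {p : Fin 6 → R} {a : Fin 4 → R}

theorem subPfaffians_mul_comm_of_skewMatrix_mulVec_eq_zero {v : Fin 5 → R}
    (hv : skewMatrix p a *ᵥ v = 0) (i j : Fin 5) :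
    subPfaffians p a i * v j = subPfaffians p a j * v i := by
  obtain ⟨b, hb⟩ := koszul_mem_range_skewMatrix p a i j
  have hbv : v ⬝ᵥ skewMatrix p a *ᵥ b = 0 := by
    rw [dotProduct_mulVec, ← mulVec_transpose, transpose_skewMatrix, neg_mulVec, hv, neg_zero,
      zero_dotProduct]
  rw [← mulVecLin_apply, hb, dotProduct_sub, dotProduct_smul, dotProduct_smul] at hbv
  simpa [sub_eq_zero] using hbv

theorem exact_subPfaffians_skewMatrix [IsDomain R] {i j : Fin 5}
    (hi : Prime (subPfaffians p a i)) (hij : ¬ subPfaffians p a i ∣ subPfaffians p a j) :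
    Function.Exact (replicateCol Unit (subPfaffians p a)).mulVecLin
      (skewMatrix p a).mulVecLin := by
  refine fun v ↦ ⟨fun hv ↦ ?_, ?_⟩
  · have hcomm := subPfaffians_mul_comm_of_skewMatrix_mulVec_eq_zero hv i
    obtain ⟨c, hc⟩ : subPfaffians p a i ∣ v i :=
      (hi.dvd_or_dvd ⟨v j, (hcomm j).symm⟩).resolve_left hij
    refine ⟨fun _ ↦ c, funext fun k ↦ mul_left_cancel₀ hi.ne_zero ?_⟩
    rw [hcomm k, hc]
    simp [mulVec, dotProduct, mul_left_comm]
  · rintro ⟨c, rfl⟩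
    rw [mulVecLin_apply, mulVecLin_apply, mulVec_mulVec, ← replicateCol_mulVec,
      skewMatrix_mulVec_subPfaffians, replicateCol_zero, zero_mulVec]

theorem exists_pow_smul_mem_range_skewMatrix {i j : Fin 5} {s : Finset (Fin 5)}
    (hs : ∀ k ∉ s, k = i ∨ k = j)
    (hreg : IsWeaklyRegularAway (skewMatrix p a i j) (subPfaffians p a) s) {u : Fin 5 → R}
    (hu : subPfaffians p a ⬝ᵥ u = 0) :
    ∃ n : ℕ, skewMatrix p a i j ^ n • u ∈ LinearMap.range (skewMatrix p a).mulVecLin := by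
  set b : Fin 5 → R := Pi.single i (u j) - Pi.single j (u i) with hb
  set u' : Fin 5 → R := skewMatrix p a i j • u + skewMatrix p a *ᵥ b with hu'
  have hsupp : ∀ k ∉ s, u' k = 0 := fun k hk ↦ by
    rcases hs k hk with rfl | rfl
    · simp [hu', hb, mulVec_sub, skewMatrix_apply_self, mul_comm (u k)]
    · simp [hu', hb, mulVec_sub, skewMatrix_apply_self, skewMatrix_apply_swap p a i k,
        mul_comm (u k)]
  have hsyz : subPfaffians p a ⬝ᵥ u' = 0 := by
    rw [hu', dotProduct_add, dotProduct_smul, hu, smul_zero, zero_add,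
      subPfaffians_dotProduct_skewMatrix_mulVec]
  obtain ⟨n, hn⟩ := hreg.exists_pow_smul_mem (koszul_mem_range_skewMatrix p a) hsupp hsyz
  have hMb : skewMatrix p a *ᵥ b ∈ LinearMap.range (skewMatrix p a).mulVecLin := ⟨b, rfl⟩
  refine ⟨n + 1, ?_⟩
  rw [pow_succ, mul_smul, eq_sub_of_add_eq hu'.symm, smul_sub]
  exact sub_mem hn (Submodule.smul_mem _ _ hMb)

theorem exact_skewMatrix_subPfaffians {i j : Fin 5} {s : Finset (Fin 5)}
    (hs : ∀ k ∉ s, k = i ∨ k = j)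
    (hreg : IsWeaklyRegularAway (skewMatrix p a i j) (subPfaffians p a) s)
    (hsat : IsSMulRegular ((Fin 5 → R) ⧸ LinearMap.range (skewMatrix p a).mulVecLin)
      (skewMatrix p a i j)) :
    Function.Exact (skewMatrix p a).mulVecLin
      (replicateRow Unit (subPfaffians p a)).mulVecLin := by
  refine fun u ↦ ⟨fun hu ↦ ?_, ?_⟩
  · obtain ⟨n, hn⟩ := exists_pow_smul_mem_range_skewMatrix hs hreg (congrFun hu ())
    exact mem_of_pow_smul_mem hsat hn
  · rintro ⟨v, rfl⟩
    exact funext fun _ ↦ subPfaffians_dotProduct_skewMatrix_mulVec p a v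

theorem subPfaffians_apply_eq_zero_of_forall_ne [IsDomain R] {i j : Fin 5}
    (hij : skewMatrix p a i j ≠ 0) (h : ∀ k, k ≠ i → k ≠ j → subPfaffians p a k = 0) :
    subPfaffians p a j = 0 := by
  have hrow : skewMatrix p a i j * subPfaffians p a j = 0 := by
    refine (Finset.sum_eq_single_of_mem (f := fun k ↦ skewMatrix p a i k * subPfaffians p a k) j
      (Finset.mem_univ j) fun k _ hkj ↦ ?_).symm.trans
        (congrFun (skewMatrix_mulVec_subPfaffians p a) i)
    by_cases hki : k = i
    · rw [hki, skewMatrix_apply_self, zero_mul]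
    · rw [h k hki hkj, mul_zero]
  exact (mul_eq_zero_iff_left hij).1 hrow

theorem subPfaffians_eq_zero_of_forall_ne [IsDomain R] {i j : Fin 5}
    (hij : skewMatrix p a i j ≠ 0) (h : ∀ k, k ≠ i → k ≠ j → subPfaffians p a k = 0) :
    subPfaffians p a = 0 := by
  have hji : skewMatrix p a j i ≠ 0 := by rwa [skewMatrix_apply_swap, neg_ne_zero]
  ext k
  by_cases hki : k = i
  · exact hki ▸ subPfaffians_apply_eq_zero_of_forall_ne hji fun l hj hi ↦ h l hi hj
  by_cases hkj : k = j
  · exact hkj ▸ subPfaffians_apply_eq_zero_of_forall_ne hij h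
  exact h k hki hkj

end Exactness

section Equivariance

variable {R : Type*} [CommRing R]

/-- The second compound matrix of `m`, i.e. the matrix of `Λ²m` in the basis `e_i ∧ e_j` indexed by
`idxPair`. -/
def secondCompound (m : Matrix (Fin 4) (Fin 4) R) : Matrix (Fin 6) (Fin 6) R :=
  of fun s t ↦ m (idxPair s).1 (idxPair t).1 * m (idxPair s).2 (idxPair t).2 -
    m (idxPair s).1 (idxPair t).2 * m (idxPair s).2 (idxPair t).1

/-- The block diagonal matrix of `id ⊕ m` on `R ⊕ R⁴`. -/
def oneBlock (m : Matrix (Fin 4) (Fin 4) R) : Matrix (Fin 5) (Fin 5) R :=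
  of (vecCons (vecCons 1 0) fun i ↦ vecCons 0 (m i))

theorem oneBlock_mul (m n : Matrix (Fin 4) (Fin 4) R) :
    oneBlock (m * n) = oneBlock m * oneBlock n := by
  ext i j
  refine Fin.cases ?_ (fun i ↦ ?_) i <;> refine Fin.cases ?_ (fun j ↦ ?_) j <;>
    simp [oneBlock, mul_apply, Fin.sum_univ_succ]

theorem oneBlock_one : oneBlock (1 : Matrix (Fin 4) (Fin 4) R) = 1 := by
  ext i j
  refine Fin.cases ?_ (fun i ↦ ?_) i <;> refine Fin.cases ?_ (fun j ↦ ?_) j <;>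
    simp [oneBlock, one_apply, Fin.succ_ne_zero, (Fin.succ_ne_zero _).symm]

theorem oneBlock_mulVec_vecCons (m : Matrix (Fin 4) (Fin 4) R) (r : R) (v : Fin 4 → R) :
    oneBlock m *ᵥ vecCons r v = vecCons r (m *ᵥ v) := by
  ext i
  refine Fin.cases ?_ (fun i ↦ ?_) i <;> simp [oneBlock, mulVec, dotProduct, Fin.sum_univ_succ]

theorem oneBlock_transpose (m : Matrix (Fin 4) (Fin 4) R) : (oneBlock m)ᵀ = oneBlock mᵀ := by
  ext i j
  refine Fin.cases ?_ (fun i ↦ ?_) i <;> refine Fin.cases ?_ (fun j ↦ ?_) j <;> simp [oneBlock]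

theorem skewMatrix_secondCompound_mulVec (m : Matrix (Fin 4) (Fin 4) R) (p : Fin 6 → R)
    (a : Fin 4 → R) :
    skewMatrix (secondCompound m *ᵥ p) (m *ᵥ a) =
      oneBlock m * skewMatrix p a * (oneBlock m)ᵀ := by
  ext i j
  simp only [mul_apply, transpose_apply, Fin.sum_univ_five]
  fin_cases i <;> fin_cases j <;>
    simp only [skewMatrix, oneBlock, secondCompound, idxPair, mulVec, dotProduct, of_apply,
      Fin.sum_univ_six, Fin.sum_univ_four, Fin.zero_eta, Fin.mk_one, Fin.reduceFinMk, cons_val,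
      Pi.zero_apply] <;> ring

theorem oneBlock_transpose_mulVec_subPfaffians (m : Matrix (Fin 4) (Fin 4) R) (p : Fin 6 → R)
    (a : Fin 4 → R) :
    (oneBlock m)ᵀ *ᵥ subPfaffians (secondCompound m *ᵥ p) (m *ᵥ a) =
      m.det • subPfaffians p a := by
  rw [det_succ_row_zero]
  ext i
  fin_cases i <;>
    simp [subPfaffians, oneBlock, secondCompound, idxPair, mulVec, dotProduct,
      Fin.sum_univ_succ, det_fin_three, Fin.succAbove] <;> ring

theorem oneBlock_mul_skewMatrix_secondCompound_mulVec {g m : Matrix (Fin 4) (Fin 4) R}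
    (hgm : g * m = 1) (p : Fin 6 → R) (a : Fin 4 → R) :
    oneBlock g * skewMatrix (secondCompound m *ᵥ p) (m *ᵥ a) =
      skewMatrix p a * (oneBlock m)ᵀ := by
  rw [skewMatrix_secondCompound_mulVec, mul_assoc, ← mul_assoc, ← oneBlock_mul, hgm, oneBlock_one,
    one_mul]

theorem det_smul_subPfaffians_vecMul_oneBlock {g m : Matrix (Fin 4) (Fin 4) R}
    (hmg : m * g = 1) (p : Fin 6 → R) (a : Fin 4 → R) :
    (m.det • subPfaffians p a) ᵥ* oneBlock g = subPfaffians (secondCompound m *ᵥ p) (m *ᵥ a) := by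
  rw [← oneBlock_transpose_mulVec_subPfaffians, mulVec_transpose, vecMul_vecMul, ← oneBlock_mul,
    hmg, oneBlock_one, vecMul_one]

end Equivariance

theorem mem_range_replicateRow {R n : Type*} [CommRing R] [Fintype n] {f : n → R} {u : Unit → R} :
    u ∈ LinearMap.range (replicateRow Unit f).mulVecLin ↔
      u () ∈ Ideal.span (Set.range f) := by
  simp [Ideal.mem_span_range_iff_exists_fun, funext_iff, Unique.forall_iff, mulVec,
    dotProduct, mul_comm]

section Generic

open Sum (inl inr)

variable (K : Type*) [Field K]

/-- The coordinates of `Λ²H`, as elements of the polynomial ring on `Λ²H × H`. -/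
def genericBivector : Fin 6 → MvPolynomial (Fin 6 ⊕ Fin 4) K := fun s ↦ X (inl s)

/-- The coordinates of `H`, as elements of the polynomial ring on `Λ²H × H`. -/
def genericVector : Fin 4 → MvPolynomial (Fin 6 ⊕ Fin 4) K := fun i ↦ X (inr i)

theorem prime_subPfaffians_genericBivector_zero (a : Fin 4 → MvPolynomial (Fin 6 ⊕ Fin 4) K) :
    Prime (subPfaffians (genericBivector K) a 0) := by
  set q : MvPolynomial (Fin 6 ⊕ Fin 4) K := X (inl 2) * X (inl 3) - X (inl 1) * X (inl 4) with hq
  have hq_vars : inl 0 ∉ q.vars := fun h ↦ by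
    have hq_mem : q ∈ supported K {inl 0}ᶜ := by
      refine sub_mem (mul_mem ?_ ?_) (mul_mem ?_ ?_) <;> simp [X_mem_supported]
    exact mem_supported.1 hq_mem h rfl
  have hrel : IsRelPrime (X (inl 5)) q := by
    refine (X_prime.irreducible.isRelPrime_iff_not_dvd).2 fun hdvd ↦ ?_
    simpa [hq] using map_dvd (eval (Sum.elim ![0, 0, 1, 1, 0, 0] 0)) hdvd
  have heq : subPfaffians (genericBivector K) a 0 = X (inl 5) * X (inl 0) + q := by
    simp only [subPfaffians, genericBivector, hq, cons_val]
    ring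
  rw [heq, ← irreducible_iff_prime]
  exact irreducible_mul_X_add _ q (inl 0) (X_ne_zero _) (by simp [vars_X]) hq_vars hrel

theorem exact_subPfaffians_skewMatrix_genericBivector
    {a : Fin 4 → MvPolynomial (Fin 6 ⊕ Fin 4) K} (ha : a 3 = X (inr 3)) :
    Function.Exact (replicateCol Unit (subPfaffians (genericBivector K) a)).mulVecLin
      (skewMatrix (genericBivector K) a).mulVecLin := by
  refine exact_subPfaffians_skewMatrix (prime_subPfaffians_genericBivector_zero K a)
    (j := 1) fun hdvd ↦ ?_
  simpa [subPfaffians, genericBivector, ha] using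
    map_dvd (eval (Sum.elim ![0, 0, 0, 1, 0, 0] ![0, 0, 0, 1])) hdvd

theorem aeval_update_comp_genericBivector (k : Fin 4) :
    aeval (R := K) (Function.update X (inr k) 0) ∘ genericBivector K = genericBivector K := by
  ext1 s
  simp [genericBivector]

theorem isSMulRegular_quotient_range_skewMatrix {k : Fin 4}
    {a : Fin 4 → MvPolynomial (Fin 6 ⊕ Fin 4) K}
    (ha : aeval (R := K) (Function.update X (inr k) 0) (a 3) = (X (inr 3) : MvPolynomial _ K)) :
    IsSMulRegular ((Fin 5 → MvPolynomial (Fin 6 ⊕ Fin 4) K) ⧸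
      LinearMap.range (skewMatrix (genericBivector K) a).mulVecLin)
      (X (inr k) : MvPolynomial (Fin 6 ⊕ Fin 4) K) := by
  set φ : MvPolynomial (Fin 6 ⊕ Fin 4) K →+* MvPolynomial (Fin 6 ⊕ Fin 4) K :=
    (aeval (Function.update X (inr k) 0)).toRingHom
  have hφp : φ ∘ genericBivector K = genericBivector K := aeval_update_comp_genericBivector K k
  have hexact := exact_subPfaffians_skewMatrix_genericBivector K (a := φ ∘ a) ha
  rw [← hφp, ← skewMatrix_map, ← map_comp_subPfaffians] at hexact
  refine isSMulRegular_quotient_range_mulVecLin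
    (B := replicateCol Unit (subPfaffians (genericBivector K) a))
    (IsRegular.of_ne_zero (X_ne_zero _)).left.isSMulRegular (by simp)
    (X_dvd_sub_aeval_update (inr k)) ?_ hexact
  rw [← replicateCol_mulVec, skewMatrix_mulVec_subPfaffians, replicateCol_zero]

theorem solvesForVariables_subPfaffians_update :
    SolvesForVariables (X (inr 1))
      (subPfaffians (genericBivector K) (Function.update (genericVector K) 0 0))
      ![inl 0, inl 5, inl 0, inl 2, inl 1]
      (Sum.elim ![0, X (inl 0) * X (inr 2), X (inl 0) * X (inr 3), 0, 0,
        X (inl 4) * X (inr 2) - X (inl 3) * X (inr 3)] 0)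
      {1, 3, 4} where
  injOn := by simp [Set.InjOn]
  mem_supported := by simp [X_mem_supported]
  apply_mem_supported := by
    simp only [Finset.forall_mem_insert, Finset.mem_singleton, forall_eq, cons_val, Sum.elim_inl]
    refine ⟨sub_mem (mul_mem ?_ ?_) (mul_mem ?_ ?_), mul_mem ?_ ?_, mul_mem ?_ ?_⟩ <;>
      simp [X_mem_supported]
  associated := by
    simp only [Finset.forall_mem_insert, Finset.mem_singleton, forall_eq, cons_val, Sum.elim_inl,
      subPfaffians, genericBivector, genericVector, Function.update]
    refine ⟨.of_eq ?_, Associated.neg_left_iff.1 (.of_eq ?_), .of_eq ?_⟩ <;> simp <;> ring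

theorem solvesForVariables_subPfaffians_genericVector :
    SolvesForVariables (X (inr 0)) (subPfaffians (genericBivector K) (genericVector K))
      ![inl 0, inl 0, inl 5, inl 4, inl 3]
      (Sum.elim ![0, 0, 0, X (inl 1) * X (inr 1) - X (inl 0) * X (inr 2),
        X (inl 2) * X (inr 1) - X (inl 0) * X (inr 3),
        X (inl 2) * X (inr 2) - X (inl 1) * X (inr 3)] 0)
      {2, 3, 4} where
  injOn := by simp [Set.InjOn]
  mem_supported := by simp [X_mem_supported]
  apply_mem_supported := by
    simp only [Finset.forall_mem_insert, Finset.mem_singleton, forall_eq, cons_val, Sum.elim_inl]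
    refine ⟨sub_mem (mul_mem ?_ ?_) (mul_mem ?_ ?_), sub_mem (mul_mem ?_ ?_) (mul_mem ?_ ?_),
      sub_mem (mul_mem ?_ ?_) (mul_mem ?_ ?_)⟩ <;> simp [X_mem_supported]
  associated := by
    simp only [Finset.forall_mem_insert, Finset.mem_singleton, forall_eq, cons_val, Sum.elim_inl,
      subPfaffians, genericBivector, genericVector, Associated.neg_left_iff]
    refine ⟨.of_eq ?_, .of_eq ?_, .of_eq ?_⟩ <;> ring

theorem eval_comp_subPfaffians_generic (z : Fin 6 ⊕ Fin 4 → K) :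
    eval z ∘ subPfaffians (genericBivector K) (genericVector K) =
      subPfaffians (z ∘ inl) (z ∘ inr) := by
  rw [map_comp_subPfaffians]
  congr 1 <;> ext1 i <;> simp [genericBivector, genericVector]

variable [Infinite K]

theorem exact_skewMatrix_subPfaffians_update :
    Function.Exact
      (skewMatrix (genericBivector K) (Function.update (genericVector K) 0 0)).mulVecLin
      (replicateRow Unit
        (subPfaffians (genericBivector K) (Function.update (genericVector K) 0 0))).mulVecLin :=
  exact_skewMatrix_subPfaffians (i := 2) (j := 0) (s := {1, 3, 4}) (by decide)
    ((solvesForVariables_subPfaffians_update K).isWeaklyRegularAway (X_ne_zero _))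
    (isSMulRegular_quotient_range_skewMatrix K (k := 1) (by simp [genericVector]))

theorem exact_skewMatrix_subPfaffians_generic :
    Function.Exact (skewMatrix (genericBivector K) (genericVector K)).mulVecLin
      (replicateRow Unit (subPfaffians (genericBivector K) (genericVector K))).mulVecLin :=
  exact_skewMatrix_subPfaffians (i := 1) (j := 0) (s := {2, 3, 4}) (by decide)
    ((solvesForVariables_subPfaffians_genericVector K).isWeaklyRegularAway (X_ne_zero _))
    (isSMulRegular_quotient_range_skewMatrix K (k := 0) (by simp [genericVector]))

theorem isSMulRegular_quotient_range_subPfaffians :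
    IsSMulRegular ((Unit → MvPolynomial (Fin 6 ⊕ Fin 4) K) ⧸
      LinearMap.range (replicateRow Unit
        (subPfaffians (genericBivector K) (genericVector K))).mulVecLin)
      (X (inr 0) : MvPolynomial (Fin 6 ⊕ Fin 4) K) := by
  set φ : MvPolynomial (Fin 6 ⊕ Fin 4) K →+* MvPolynomial (Fin 6 ⊕ Fin 4) K :=
    (aeval (Function.update X (inr 0) 0)).toRingHom
  have hφp : φ ∘ genericBivector K = genericBivector K := aeval_update_comp_genericBivector K 0
  have hφa : φ ∘ genericVector K = Function.update (genericVector K) 0 0 := by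
    ext1 i
    by_cases hi : i = 0 <;> simp [φ, genericVector, hi]
  have hexact := exact_skewMatrix_subPfaffians_update K
  nth_rw 1 2 [← hφp] at hexact
  rw [← hφa, ← skewMatrix_map, ← map_comp_subPfaffians] at hexact
  refine isSMulRegular_quotient_range_mulVecLin
    (B := skewMatrix (genericBivector K) (genericVector K))
    (IsRegular.of_ne_zero (X_ne_zero _)).left.isSMulRegular (by simp)
    (X_dvd_sub_aeval_update (inr 0)) ?_ hexact
  rw [← replicateRow_vecMul, subPfaffians_vecMul_skewMatrix, replicateRow_zero]

theorem vanishingIdeal_subPfaffians_eq_zero :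
    vanishingIdeal K {z : Fin 6 ⊕ Fin 4 → K | subPfaffians (z ∘ inl) (z ∘ inr) = 0} =
      Ideal.span (Set.range (subPfaffians (genericBivector K) (genericVector K))) := by
  refine le_antisymm (fun u hu ↦ ?_) (Ideal.span_le.2 (Set.range_subset_iff.2 fun k z hz ↦ ?_))
  · have hsolve := solvesForVariables_subPfaffians_genericVector K
    obtain ⟨n, hn⟩ := hsolve.exists_pow_mul_mem_span (X_ne_zero _) hsolve.mem_supported
      (X_ne_zero _) (u := u) fun z hz0 hz ↦ by
        rw [← aeval_eq_eval]
        refine hu z (subPfaffians_eq_zero_of_forall_ne (i := 1) (j := 0)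
          (by simpa [skewMatrix] using hz0) fun k hk1 hk0 ↦ ?_)
        rw [← eval_comp_subPfaffians_generic]
        exact hz k (by revert hk1 hk0; decide +revert)
    exact mem_range_replicateRow.1 <|
      mem_of_pow_smul_mem (u := fun _ : Unit ↦ u) (isSMulRegular_quotient_range_subPfaffians K) <|
        mem_range_replicateRow.2 (Ideal.span_mono (Set.image_subset_range _ _) hn)
  · rw [aeval_eq_eval]
    exact congrFun ((eval_comp_subPfaffians_generic K z).trans hz) k

end Generic

section Differentials

variable {R : Type*} [CommRing R] (p : Fin 6 → R) (a : Fin 4 → R)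

/-- The identification of `R ⊕ R⁴`, the target of `pfaffianSkew`, with `R⁵`. -/
def consEquiv (R : Type*) [CommRing R] : (R × (Fin 4 → R)) ≃ₗ[R] (Fin 5 → R) :=
  Fin.consLinearEquiv R fun _ ↦ R

/-- The identification of `R⁴ ⊕ R`, the source of `pfaffianSkew`, with `R⁵` that puts the last
summand first. -/
def swapConsEquiv (R : Type*) [CommRing R] : ((Fin 4 → R) × R) ≃ₗ[R] (Fin 5 → R) :=
  LinearEquiv.prodComm R (Fin 4 → R) R ≪≫ₗ consEquiv R

/-- The differential `R ⊕ R⁴ → R` of the Pfaffian complex, whose entries are the Pfaffians. -/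
def pfaffianRow : (R × (Fin 4 → R)) →ₗ[R] R :=
  (LinearEquiv.funUnique Unit R R).toLinearMap ∘ₗ
    (replicateRow Unit (subPfaffians p a)).mulVecLin ∘ₗ (consEquiv R).toLinearMap

/-- The differential `R⁴ ⊕ R → R ⊕ R⁴` of the Pfaffian complex, given by the skew matrix. -/
def pfaffianSkew : ((Fin 4 → R) × R) →ₗ[R] (R × (Fin 4 → R)) :=
  (consEquiv R).symm.toLinearMap ∘ₗ (skewMatrix p a).mulVecLin ∘ₗ (swapConsEquiv R).toLinearMap

/-- The differential `R → R⁴ ⊕ R` of the Pfaffian complex, dual to `pfaffianRow p a`. -/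
def pfaffianCol : R →ₗ[R] ((Fin 4 → R) × R) :=
  (swapConsEquiv R).symm.toLinearMap ∘ₗ (replicateCol Unit (subPfaffians p a)).mulVecLin ∘ₗ
    (LinearEquiv.funUnique Unit R R).symm.toLinearMap

theorem pfaffianRow_apply (v : R × (Fin 4 → R)) :
    pfaffianRow p a v = subPfaffians p a ⬝ᵥ consEquiv R v := rfl

theorem consEquiv_pfaffianSkew (v : (Fin 4 → R) × R) :
    consEquiv R (pfaffianSkew p a v) = skewMatrix p a *ᵥ swapConsEquiv R v :=
  (consEquiv R).apply_symm_apply _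

theorem swapConsEquiv_pfaffianCol (r : R) :
    swapConsEquiv R (pfaffianCol p a r) = r • subPfaffians p a := by
  refine ((swapConsEquiv R).apply_symm_apply _).trans (funext fun i ↦ ?_)
  simp [mulVec, dotProduct, mul_comm]

theorem exact_pfaffianSkew_pfaffianRow_iff :
    Function.Exact (pfaffianSkew p a) (pfaffianRow p a) ↔
      Function.Exact (skewMatrix p a).mulVecLin
        (replicateRow Unit (subPfaffians p a)).mulVecLin :=
  (Function.Exact.iff_of_ladder_linearEquiv (e₁ := swapConsEquiv R) (e₂ := consEquiv R)
    (e₃ := (LinearEquiv.funUnique Unit R R).symm)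
    (LinearMap.ext fun v ↦ (consEquiv_pfaffianSkew p a v).symm) rfl).symm

theorem exact_pfaffianCol_pfaffianSkew_iff :
    Function.Exact (pfaffianCol p a) (pfaffianSkew p a) ↔
      Function.Exact (replicateCol Unit (subPfaffians p a)).mulVecLin
        (skewMatrix p a).mulVecLin :=
  (Function.Exact.iff_of_ladder_linearEquiv (e₁ := (LinearEquiv.funUnique Unit R R).symm)
    (e₂ := swapConsEquiv R) (e₃ := consEquiv R)
    (LinearMap.ext fun _ ↦ ((swapConsEquiv R).apply_symm_apply _).symm)
    (LinearMap.ext fun v ↦ (consEquiv_pfaffianSkew p a v).symm)).symm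

theorem range_pfaffianRow :
    LinearMap.range (pfaffianRow p a) = Ideal.span (Set.range (subPfaffians p a)) := by
  ext u
  rw [Ideal.mem_span_range_iff_exists_fun, LinearMap.mem_range, (consEquiv R).surjective.exists]
  simp only [pfaffianRow_apply, dotProduct, mul_comm]

variable {p a} in
theorem pfaffianCol_injective [IsDomain R] (h : subPfaffians p a ≠ 0) :
    Function.Injective (pfaffianCol p a) := by
  intro r r' hr
  refine smul_left_injective R h ?_
  simp only [← swapConsEquiv_pfaffianCol, hr]

end Differentials

section GLAction

open Sum (inl inr)
open scoped MatrixGroups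

theorem subst8_comp_genericBivector (m : Matrix (Fin 4) (Fin 4) ℂ) :
    subst8 m ∘ genericBivector ℂ = secondCompound (m.map C) *ᵥ genericBivector ℂ := by
  ext1 s
  simp [subst8, genericBivector, secondCompound, mulVec, dotProduct]

theorem subst8_comp_genericVector (m : Matrix (Fin 4) (Fin 4) ℂ) :
    subst8 m ∘ genericVector ℂ = m.map C *ᵥ genericVector ℂ := by
  ext1 i
  simp [subst8, genericVector, mulVec, dotProduct]

theorem setOf_subPfaffians_eq_zero_eq_C8 :
    {z : Fin 6 ⊕ Fin 4 → ℂ | subPfaffians (z ∘ inl) (z ∘ inr) = 0} = C8 := by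
  ext z
  simp only [C8, pl8, wedge8, subPfaffians, Set.mem_ofPred_eq, funext_iff, Fin.forall_fin_succ,
    Fin.succ_zero_eq_one, Fin.succ_one_eq_two, Fin.reduceSucc, IsEmpty.forall_iff, cons_val,
    Pi.zero_apply, Function.comp_apply, neg_eq_zero, map_add, map_sub, map_mul, eval_X]
  tauto

theorem J8_eq_span_range_subPfaffians :
    J8 = Ideal.span (Set.range (subPfaffians (genericBivector ℂ) (genericVector ℂ))) := by
  rw [← vanishingIdeal_subPfaffians_eq_zero, setOf_subPfaffians_eq_zero_eq_C8]
  rfl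

theorem map_C_mul_map_C_eq_one {R σ n : Type*} [CommSemiring R] [Fintype n] [DecidableEq n]
    {g h : Matrix n n R} (hgh : g * h = 1) :
    g.map C * h.map C = (1 : Matrix n n (MvPolynomial σ R)) := by
  rw [← Matrix.map_mul, hgh, Matrix.map_one _ C_0 C_1]

theorem C_det {R σ n : Type*} [CommRing R] [Fintype n] [DecidableEq n] (m : Matrix n n R) :
    (C m.det : MvPolynomial σ R) = (m.map C).det :=
  RingHom.map_det C m

theorem subst8_comp_subPfaffians (m : Matrix (Fin 4) (Fin 4) ℂ) :
    subst8 m ∘ subPfaffians (genericBivector ℂ) (genericVector ℂ) =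
      subPfaffians (secondCompound (m.map C) *ᵥ genericBivector ℂ)
        (m.map C *ᵥ genericVector ℂ) := by
  rw [map_comp_subPfaffians, subst8_comp_genericBivector, subst8_comp_genericVector]

theorem subst8_comp_skewMatrix_mulVec (m : Matrix (Fin 4) (Fin 4) ℂ) (w : Fin 5 → R8) :
    subst8 m ∘ (skewMatrix (genericBivector ℂ) (genericVector ℂ) *ᵥ w) =
      skewMatrix (secondCompound (m.map C) *ᵥ genericBivector ℂ) (m.map C *ᵥ genericVector ℂ) *ᵥ
        (subst8 m ∘ w) := by
  rw [← subst8_comp_genericBivector, ← subst8_comp_genericVector, ← skewMatrix_map,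
    map_comp_mulVec]

theorem consEquiv_act1 (g : GL (Fin 4) ℂ) (v : R8 × (Fin 4 → R8)) :
    consEquiv R8 (act1 g v) = (C g⁻¹.val.det : R8) •
      oneBlock (g.val.map C) *ᵥ (subst8 g⁻¹.val ∘ consEquiv R8 v) := by
  have hcons : subst8 g⁻¹.val ∘ consEquiv R8 v =
      vecCons (subst8 g⁻¹.val v.1) (subst8 g⁻¹.val ∘ v.2) := Fin.comp_cons _ _ _
  rw [hcons, oneBlock_mulVec_vecCons, smul_cons]
  rfl

theorem swapConsEquiv_act2 (g : GL (Fin 4) ℂ) (v : (Fin 4 → R8) × R8) :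
    swapConsEquiv R8 (act2 g v) = (C g⁻¹.val.det : R8) •
      (oneBlock (g⁻¹.val.map C))ᵀ *ᵥ (subst8 g⁻¹.val ∘ swapConsEquiv R8 v) := by
  have hcons : subst8 g⁻¹.val ∘ swapConsEquiv R8 v =
      vecCons (subst8 g⁻¹.val v.2) (subst8 g⁻¹.val ∘ v.1) := Fin.comp_cons _ _ _
  rw [hcons, oneBlock_transpose, oneBlock_mulVec_vecCons, smul_cons]
  rfl

theorem pfaffianRow_act1 (g : GL (Fin 4) ℂ) (v : R8 × (Fin 4 → R8)) :
    pfaffianRow (genericBivector ℂ) (genericVector ℂ) (act1 g v) =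
      act0 g (pfaffianRow (genericBivector ℂ) (genericVector ℂ) v) := by
  rw [pfaffianRow_apply, consEquiv_act1, C_det, dotProduct_smul, dotProduct_mulVec,
    ← smul_dotProduct, ← smul_vecMul,
    det_smul_subPfaffians_vecMul_oneBlock (map_C_mul_map_C_eq_one g.inv_mul),
    ← subst8_comp_subPfaffians]
  exact (RingHom.map_dotProduct (subst8 g⁻¹.val).toRingHom _ _).symm

theorem pfaffianSkew_act2 (g : GL (Fin 4) ℂ) (v : (Fin 4 → R8) × R8) :
    pfaffianSkew (genericBivector ℂ) (genericVector ℂ) (act2 g v) =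
      act1 g (pfaffianSkew (genericBivector ℂ) (genericVector ℂ) v) := by
  apply (consEquiv R8).injective
  rw [consEquiv_pfaffianSkew, consEquiv_act1, swapConsEquiv_act2, consEquiv_pfaffianSkew,
    subst8_comp_skewMatrix_mulVec, mulVec_smul, mulVec_mulVec, mulVec_mulVec,
    oneBlock_mul_skewMatrix_secondCompound_mulVec (map_C_mul_map_C_eq_one g.mul_inv)]

theorem pfaffianCol_act3 (g : GL (Fin 4) ℂ) (r : R8) :
    pfaffianCol (genericBivector ℂ) (genericVector ℂ) (act3 g r) =
      act2 g (pfaffianCol (genericBivector ℂ) (genericVector ℂ) r) := by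
  apply (swapConsEquiv R8).injective
  rw [swapConsEquiv_pfaffianCol, swapConsEquiv_act2, swapConsEquiv_pfaffianCol, map_comp_smul,
    mulVec_smul, subst8_comp_subPfaffians, oneBlock_transpose_mulVec_subPfaffians, smul_smul,
    smul_smul, ← C_det, act3, C_pow, act0]
  congr 1
  ring

end GLAction

/-- the coordinate ring `ℂ[C] = R8 ⧸ J8` admits a finite free resolution
of length 3 of the form
`0 → (det H)⁻² → H^∨(det H)⁻¹ ⊕ (det H)⁻¹ → (det H)⁻¹ ⊕ Λ³H^∨ → O → ℂ[C] → 0`,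
equivariant for `GL(H)`. -/
theorem stmt8 :
    ∃ (d₁ : (R8 × (Fin 4 → R8)) →ₗ[R8] R8)
      (d₂ : ((Fin 4 → R8) × R8) →ₗ[R8] (R8 × (Fin 4 → R8)))
      (d₃ : R8 →ₗ[R8] ((Fin 4 → R8) × R8)),
      Function.Injective d₃ ∧
      Function.Exact d₃ d₂ ∧
      Function.Exact d₂ d₁ ∧
      LinearMap.range d₁ = J8 ∧
      (∀ g : Matrix.GeneralLinearGroup (Fin 4) ℂ, ∀ v, d₁ (act1 g v) = act0 g (d₁ v)) ∧
      (∀ g : Matrix.GeneralLinearGroup (Fin 4) ℂ, ∀ v, d₂ (act2 g v) = act1 g (d₂ v)) ∧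
      (∀ g : Matrix.GeneralLinearGroup (Fin 4) ℂ, ∀ r, d₃ (act3 g r) = act2 g (d₃ r)) := by
  have hprime := prime_subPfaffians_genericBivector_zero ℂ (genericVector ℂ)
  exact ⟨pfaffianRow (genericBivector ℂ) (genericVector ℂ),
    pfaffianSkew (genericBivector ℂ) (genericVector ℂ),
    pfaffianCol (genericBivector ℂ) (genericVector ℂ),
    pfaffianCol_injective fun h ↦ hprime.ne_zero (congrFun h 0),
    (exact_pfaffianCol_pfaffianSkew_iff _ _).2
      (exact_subPfaffians_skewMatrix_genericBivector ℂ rfl),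
    (exact_pfaffianSkew_pfaffianRow_iff _ _).2 (exact_skewMatrix_subPfaffians_generic ℂ),
    (range_pfaffianRow _ _).trans J8_eq_span_range_subPfaffians.symm,
    pfaffianRow_act1, pfaffianSkew_act2, pfaffianCol_act3⟩

end
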